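/- arXiv:1807.05803 — 8 statements merged into one kernel-verified Lean document; each statement's English description precedes it below -/
import Mathlib

section
/- Let G be a directed multigraph and let s, t be distinct vertices. Then there exists an s-t min-cut M such that every s-t min-cut M' satisfies M' ≤ M, i.e., T_M ⊆ T_{M'} (M is later than every s-t min-cut). -/
/-!
Minimum cuts can be uncrossed. For a vertex set `X` let `δ X` be the set of arcs entering `X`.
Every cut `M` contains `δ T_M`, and if `t ∈ X` and `s ∉ X`, then `δ X` is a cut whose target side
lies inside `X`. Given minimum cuts `M` and `M'`, submodularity yields
`|δ (T_M ∩ T_M')| + |δ (T_M ∪ T_M')| ≤ |M| + |M'|`. Both sets on the left are cuts, so both are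
minimum, and the first one is later than `M` and `M'`. Thus the finitely many minimum cuts are
directed by lateness, and a finite nonempty directed family has a greatest element.
-/

namespace APMC

/-- `Walk tl hd s t p` : the list of arcs `p` forms a path from `s` to `t` in the
directed multigraph with tail map `tl` and head map `hd`
(the empty path goes from a vertex to itself). -/
inductive Walk {V E : Type} (tl hd : E → V) : V → V → List E → Prop
  | nil (v : V) : Walk tl hd v v []
  | cons (e : E) {v : V} {p : List E} :
      Walk tl hd (hd e) v p → Walk tl hd (tl e) v (e :: p)

variable {V E : Type}

/-- A walk from `s` to `t` using only arcs from `A`. -/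
def WalkIn (tl hd : E → V) (A : Set E) (s t : V) (p : List E) : Prop :=
  Walk tl hd s t p ∧ ∀ e ∈ p, e ∈ A

/-- `t` is reachable from `s` in `(V, A)`. -/
def Reaches (tl hd : E → V) (A : Set E) (s t : V) : Prop :=
  ∃ p, WalkIn tl hd A s t p

/-- `M` is an `s`-`t` cut in `(V, A)`: every path from `s` to `t` within `A`
contains an arc of `M`. -/
def IsCutIn (tl hd : E → V) (A : Set E) (s t : V) (M : Set E) : Prop :=
  ∀ p, WalkIn tl hd A s t p → ∃ e ∈ p, e ∈ M

/-- The target side `T_M` of a cut `M`: vertices admitting a path to `t` avoiding `M`. -/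
def targetSide (tl hd : E → V) (A : Set E) (t : V) (M : Set E) : Set V :=
  {x | ∃ p, WalkIn tl hd A x t p ∧ ∀ e ∈ p, e ∉ M}

/-- The source side `S_M` of a cut `M`: vertices admitting a path from `s` avoiding `M`. -/
def sourceSide (tl hd : E → V) (A : Set E) (s : V) (M : Set E) : Set V :=
  {x | ∃ p, WalkIn tl hd A s x p ∧ ∀ e ∈ p, e ∉ M}

/-- `M` is an `s`-`t` min-cut in `(V, A)`: a cut of minimum cardinality. -/
def IsMinCutIn (tl hd : E → V) (A : Set E) (s t : V) (M : Set E) : Prop :=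
  IsCutIn tl hd A s t M ∧ ∀ M' : Set E, IsCutIn tl hd A s t M' → M.ncard ≤ M'.ncard

/-- `M` is a minimal `s`-`t` cut in `(V, A)`: no proper subset of `M` is a cut. -/
def IsMinimalCutIn (tl hd : E → V) (A : Set E) (s t : V) (M : Set E) : Prop :=
  IsCutIn tl hd A s t M ∧ ∀ M' : Set E, M' ⊂ M → ¬ IsCutIn tl hd A s t M'

/-- `StrictLater ... M M'` means `M > M'`, i.e. `T_M ⊆ T_{M'}` and `T_M ≠ T_{M'}`. -/
def StrictLater (tl hd : E → V) (A : Set E) (t : V) (M M' : Set E) : Prop :=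
  targetSide tl hd A t M ⊆ targetSide tl hd A t M' ∧
    targetSide tl hd A t M ≠ targetSide tl hd A t M'

/-- `StrictEarlier ... M M'` means `M < M'`, i.e. `S_M ⊆ S_{M'}` and `S_M ≠ S_{M'}`. -/
def StrictEarlier (tl hd : E → V) (A : Set E) (s : V) (M M' : Set E) : Prop :=
  sourceSide tl hd A s M ⊆ sourceSide tl hd A s M' ∧
    sourceSide tl hd A s M ≠ sourceSide tl hd A s M'

/-- `M` is an `s`-`t`-latest cut in `(V, A)`:
no `s`-`t` cut `M'` satisfies `M' > M` and `|M'| ≤ |M|`. -/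
def IsLatestIn (tl hd : E → V) (A : Set E) (s t : V) (M : Set E) : Prop :=
  IsCutIn tl hd A s t M ∧
    ¬ ∃ M' : Set E, IsCutIn tl hd A s t M' ∧ StrictLater tl hd A t M' M ∧
      M'.ncard ≤ M.ncard

/-- `M` is an `s`-`t`-earliest cut in `(V, A)`:
no `s`-`t` cut `M'` satisfies `M' < M` and `|M'| ≤ |M|`. -/
def IsEarliestIn (tl hd : E → V) (A : Set E) (s t : V) (M : Set E) : Prop :=
  IsCutIn tl hd A s t M ∧
    ¬ ∃ M' : Set E, IsCutIn tl hd A s t M' ∧ StrictEarlier tl hd A s M' M ∧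
      M'.ncard ≤ M.ncard

/-- `A₁, A₂` is an arc split of the arc set: a partition of the arcs such that
no arc of `A₁` starts where an arc of `A₂` ends. -/
def ArcSplit (tl hd : E → V) (A₁ A₂ : Set E) : Prop :=
  A₁ ∪ A₂ = Set.univ ∧ A₁ ∩ A₂ = ∅ ∧
    ∀ e₁ ∈ A₂, ∀ e₂ ∈ A₁, hd e₁ ≠ tl e₂

/-- `M` is split-covering with respect to the arc split `A₁, A₂` and vertices `s`, `t`. -/
def SplitCovering (tl hd : E → V) (A₁ A₂ : Set E) (s t : V) (M : Set E) : Prop :=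
  ∀ v : V, ∃ Mv ⊆ M,
    ((s ≠ v ∧ v ≠ t ∧ (¬ Reaches tl hd A₁ s v ∨ ¬ Reaches tl hd A₂ v t)) ∨
     IsEarliestIn tl hd A₁ s v Mv ∨
     IsLatestIn tl hd A₂ v t Mv)

/-- `M` is late-covering with respect to the `s`-`t` cut `C`. -/
def LateCovering (tl hd : E → V) (t : V) (C M : Set E) : Prop :=
  ∀ e ∈ C, e ∈ M ∨ ∃ M' ⊆ M, IsLatestIn tl hd Set.univ (hd e) t M'

end APMC

open APMC

namespace APMC

section EnteringArcs

variable {V E : Type*} {tl hd : E → V} {A : Set E} {X Y : Set V}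

/-- The set `δ X` of arcs of `(V, A)` entering the vertex set `X`, i.e. the cut determined by `X`
as a candidate target side. -/
def enteringArcs (tl hd : E → V) (A : Set E) (X : Set V) : Set E :=
  {e ∈ A | tl e ∉ X ∧ hd e ∈ X}

theorem enteringArcs_inter_union_enteringArcs_union_subset :
    enteringArcs tl hd A (X ∩ Y) ∪ enteringArcs tl hd A (X ∪ Y) ⊆
      enteringArcs tl hd A X ∪ enteringArcs tl hd A Y := by
  intro e
  simp only [enteringArcs, Set.mem_union, Set.mem_inter_iff, Set.mem_ofPred_eq]
  tauto

theorem enteringArcs_inter_inter_enteringArcs_union_subset :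
    enteringArcs tl hd A (X ∩ Y) ∩ enteringArcs tl hd A (X ∪ Y) ⊆
      enteringArcs tl hd A X ∩ enteringArcs tl hd A Y := by
  intro e
  simp only [enteringArcs, Set.mem_union, Set.mem_inter_iff, Set.mem_ofPred_eq]
  tauto

theorem encard_enteringArcs_inter_add_union_le (tl hd : E → V) (A : Set E) (X Y : Set V) :
    (enteringArcs tl hd A (X ∩ Y)).encard + (enteringArcs tl hd A (X ∪ Y)).encard ≤
      (enteringArcs tl hd A X).encard + (enteringArcs tl hd A Y).encard := by
  rw [← Set.encard_union_add_encard_inter (enteringArcs tl hd A (X ∩ Y)),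
    ← Set.encard_union_add_encard_inter (enteringArcs tl hd A X)]
  exact add_le_add (Set.encard_le_encard enteringArcs_inter_union_enteringArcs_union_subset)
    (Set.encard_le_encard enteringArcs_inter_inter_enteringArcs_union_subset)

end EnteringArcs

variable {V E : Type} {tl hd : E → V} {A M M' : Set E} {s t : V} {X : Set V}

theorem target_mem_targetSide : t ∈ targetSide tl hd A t M :=
  ⟨[], ⟨Walk.nil t, by simp⟩, by simp⟩

theorem tail_mem_targetSide {e : E} (heA : e ∈ A) (heM : e ∉ M)
    (he : hd e ∈ targetSide tl hd A t M) : tl e ∈ targetSide tl hd A t M := by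
  obtain ⟨p, ⟨hp, hpA⟩, hpM⟩ := he
  exact ⟨e :: p, ⟨.cons e hp, List.forall_mem_cons.2 ⟨heA, hpA⟩⟩, List.forall_mem_cons.2 ⟨heM, hpM⟩⟩

theorem isCutIn_iff_source_notMem_targetSide :
    IsCutIn tl hd A s t M ↔ s ∉ targetSide tl hd A t M := by
  simp [IsCutIn, targetSide]

theorem enteringArcs_targetSide_subset :
    enteringArcs tl hd A (targetSide tl hd A t M) ⊆ M := by
  rintro e ⟨heA, htl, hhd⟩
  by_contra heM
  exact htl (tail_mem_targetSide heA heM hhd)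

theorem Walk.exists_tail_notMem_head_mem {x y : V} {p : List E} (hp : Walk tl hd x y p)
    (hx : x ∉ X) (hy : y ∈ X) : ∃ e ∈ p, tl e ∉ X ∧ hd e ∈ X := by
  induction hp with
  | nil v => exact absurd hy hx
  | cons e _ ih =>
    by_cases he : hd e ∈ X
    · exact ⟨e, List.mem_cons_self, hx, he⟩
    · obtain ⟨f, hf, hfX⟩ := ih he hy
      exact ⟨f, List.mem_cons_of_mem e hf, hfX⟩

theorem targetSide_enteringArcs_subset (ht : t ∈ X) :
    targetSide tl hd A t (enteringArcs tl hd A X) ⊆ X := by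
  rintro x ⟨p, ⟨hp, hpA⟩, hpX⟩
  by_contra hx
  obtain ⟨e, he, heX⟩ := hp.exists_tail_notMem_head_mem hx ht
  exact hpX e he ⟨hpA e he, heX⟩

theorem isCutIn_enteringArcs (hs : s ∉ X) (ht : t ∈ X) :
    IsCutIn tl hd A s t (enteringArcs tl hd A X) :=
  isCutIn_iff_source_notMem_targetSide.2 fun h => hs (targetSide_enteringArcs_subset ht h)

theorem exists_isMinCutIn (tl hd : E → V) (A : Set E) (hst : s ≠ t) :
    ∃ M, IsMinCutIn tl hd A s t M := by
  obtain ⟨M, hM, hmin⟩ := exists_minimalFor_of_wellFoundedLT (IsCutIn tl hd A s t) Set.ncard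
    ⟨enteringArcs tl hd A {t}, isCutIn_enteringArcs hst rfl⟩
  exact ⟨M, hM, fun N hN => (le_total M.ncard N.ncard).elim id (hmin hN)⟩

theorem encard_enteringArcs_targetSide_inter_add_union_le (tl hd : E → V) (A : Set E) (t : V)
    (M M' : Set E) :
    (enteringArcs tl hd A (targetSide tl hd A t M ∩ targetSide tl hd A t M')).encard +
      (enteringArcs tl hd A (targetSide tl hd A t M ∪ targetSide tl hd A t M')).encard ≤
        M.encard + M'.encard :=
  (encard_enteringArcs_inter_add_union_le tl hd A _ _).trans <| add_le_add
    (Set.encard_le_encard enteringArcs_targetSide_subset)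
    (Set.encard_le_encard enteringArcs_targetSide_subset)

theorem IsMinCutIn.enteringArcs_targetSide_inter [Finite E] (hM : IsMinCutIn tl hd A s t M)
    (hM' : IsMinCutIn tl hd A s t M') :
    IsMinCutIn tl hd A s t
      (enteringArcs tl hd A (targetSide tl hd A t M ∩ targetSide tl hd A t M')) := by
  have hs : s ∉ targetSide tl hd A t M := isCutIn_iff_source_notMem_targetSide.1 hM.1
  have hs' : s ∉ targetSide tl hd A t M' := isCutIn_iff_source_notMem_targetSide.1 hM'.1
  have hinter : IsCutIn tl hd A s t
      (enteringArcs tl hd A (targetSide tl hd A t M ∩ targetSide tl hd A t M')) :=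
    isCutIn_enteringArcs (fun h => hs h.1) ⟨target_mem_targetSide, target_mem_targetSide⟩
  have hunion : IsCutIn tl hd A s t
      (enteringArcs tl hd A (targetSide tl hd A t M ∪ targetSide tl hd A t M')) :=
    isCutIn_enteringArcs (fun h => h.elim hs hs') (.inl target_mem_targetSide)
  have huncross := encard_enteringArcs_targetSide_inter_add_union_le tl hd A t M M'
  simp only [← (Set.toFinite _).cast_ncard_eq] at huncross
  norm_cast at huncross
  have hunion_ge := hM'.2 _ hunion
  have hinter_le : (enteringArcs tl hd A
      (targetSide tl hd A t M ∩ targetSide tl hd A t M')).ncard ≤ M.ncard := by lia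
  exact ⟨hinter, fun N hN => hinter_le.trans (hM.2 N hN)⟩

theorem directed_targetSide_of_isMinCutIn [Finite E] (tl hd : E → V) (A : Set E) (s t : V) :
    Directed (· ⊇ ·)
      fun M : {M // IsMinCutIn tl hd A s t M} => targetSide tl hd A t M := by
  rintro ⟨M, hM⟩ ⟨M', hM'⟩
  have hsub : targetSide tl hd A t
      (enteringArcs tl hd A (targetSide tl hd A t M ∩ targetSide tl hd A t M')) ⊆
        targetSide tl hd A t M ∩ targetSide tl hd A t M' :=
    targetSide_enteringArcs_subset ⟨target_mem_targetSide, target_mem_targetSide⟩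
  exact ⟨⟨_, hM.enteringArcs_targetSide_inter hM'⟩, hsub.trans Set.inter_subset_left,
    hsub.trans Set.inter_subset_right⟩

end APMC

theorem exists_min_cut_later_than_all_general {V E : Type} [Finite E]
    (tl hd : E → V) (A : Set E) (s t : V) (hst : s ≠ t) :
    ∃ M : Set E, IsMinCutIn tl hd A s t M ∧
      ∀ M' : Set E, IsMinCutIn tl hd A s t M' →
        targetSide tl hd A t M ⊆ targetSide tl hd A t M' := by
  have : Nonempty {M // IsMinCutIn tl hd A s t M} :=
    nonempty_subtype.2 (exists_isMinCutIn tl hd A hst)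
  obtain ⟨M, hM⟩ := (directed_targetSide_of_isMinCutIn tl hd A s t).finite_le id
  exact ⟨M, M.2, fun M' hM' => hM ⟨M', hM'⟩⟩

/-- There exists an `s`-`t` min-cut `M` that is later than every `s`-`t` min-cut `M'`,
i.e. `T_M ⊆ T_{M'}` for every `s`-`t` min-cut `M'`. -/
theorem exists_min_cut_later_than_all {V E : Type} [Fintype V] [Fintype E]
    (tl hd : E → V) (s t : V) (hst : s ≠ t) :
    ∃ M : Set E, IsMinCutIn tl hd Set.univ s t M ∧
      ∀ M' : Set E, IsMinCutIn tl hd Set.univ s t M' →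
        targetSide tl hd Set.univ t M ⊆ targetSide tl hd Set.univ t M' :=
  exists_min_cut_later_than_all_general tl hd Set.univ s t hst
end

section
/- Let G be a directed multigraph with distinct vertices s, t, and let M be a minimal s-t cut. Then M is exactly the set of arcs whose tail lies in the source side S_M and whose head lies in the target side T_M; that is, M = {e ∈ E : tail(e) ∈ S_M and head(e) ∈ T_M}. -/
open APMC

/-!
Avoiding `M` means using only arcs of `A \ M`, so both sides of a cut, and being a cut at all, are
statements about reachability in `(V, A \ M)`. Removing an arc `e ∈ M` from the cut gives that arc
back to the graph, and adding an arc `e` makes an unreachable `t` reachable from `s` exactly when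
`tl e` was already reachable from `s` and `t` from `hd e`. Hence, for a cut `M`, the arcs `e` of `A`
for which `M \ {e}` is not a cut are precisely the crossing arcs; for a minimal cut, they are also
precisely the arcs of `M`.
-/

namespace APMC

variable {V E : Type} {tl hd : E → V} {A B M : Set E} {s t u v w : V} {e : E}

theorem Walk.append {p q : List E} (hp : Walk tl hd u v p) (hq : Walk tl hd v w q) :
    Walk tl hd u w (p ++ q) := by
  induction hp with
  | nil => exact hq
  | cons e _ ih => exact .cons e (ih hq)

namespace Reaches

theorem refl (v : V) : Reaches tl hd A v v :=
  ⟨[], .nil v, by simp⟩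

theorem head (he : e ∈ A) (h : Reaches tl hd A (hd e) v) : Reaches tl hd A (tl e) v := by
  obtain ⟨p, hp, hpA⟩ := h
  exact ⟨e :: p, .cons e hp, List.forall_mem_cons.2 ⟨he, hpA⟩⟩

theorem trans (huv : Reaches tl hd A u v) (hvw : Reaches tl hd A v w) : Reaches tl hd A u w := by
  obtain ⟨p, hp, hpA⟩ := huv
  obtain ⟨q, hq, hqA⟩ := hvw
  exact ⟨p ++ q, hp.append hq, List.forall_mem_append.2 ⟨hpA, hqA⟩⟩

theorem mono (hAB : A ⊆ B) (h : Reaches tl hd A u v) : Reaches tl hd B u v := by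
  obtain ⟨p, hp, hpA⟩ := h
  exact ⟨p, hp, fun e he => hAB (hpA e he)⟩

end Reaches

theorem reaches_insert_iff :
    Reaches tl hd (insert e A) u v ↔
      Reaches tl hd A u v ∨ Reaches tl hd A u (tl e) ∧ Reaches tl hd A (hd e) v := by
  constructor
  · rintro ⟨p, hp, hpA⟩
    induction hp with
    | nil v => exact .inl (.refl v)
    | cons f _ ih =>
      obtain ⟨hf, hpA⟩ := List.forall_mem_cons.1 hpA
      rcases hf with rfl | hfA
      · exact .inr ⟨.refl _, (ih hpA).elim id And.right⟩
      · exact (ih hpA).imp (.head hfA) (And.imp_left (.head hfA))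
  · have hA : A ⊆ insert e A := Set.subset_insert e A
    rintro (h | ⟨hu, hv⟩)
    · exact h.mono hA
    · exact (hu.mono hA).trans (.head (Set.mem_insert e A) (hv.mono hA))

theorem walkIn_sdiff_iff {p : List E} :
    WalkIn tl hd (A \ M) u v p ↔ WalkIn tl hd A u v p ∧ ∀ e ∈ p, e ∉ M := by
  simp only [WalkIn, Set.mem_sdiff, forall₂_and, and_assoc]

theorem mem_sourceSide_iff : v ∈ sourceSide tl hd A s M ↔ Reaches tl hd (A \ M) s v :=
  exists_congr fun _ => walkIn_sdiff_iff.symm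

theorem mem_targetSide_iff : v ∈ targetSide tl hd A t M ↔ Reaches tl hd (A \ M) v t :=
  exists_congr fun _ => walkIn_sdiff_iff.symm

theorem isCutIn_iff_not_reaches : IsCutIn tl hd A s t M ↔ ¬ Reaches tl hd (A \ M) s t := by
  simp only [IsCutIn, Reaches, walkIn_sdiff_iff, not_exists, not_and, not_forall, not_not,
    exists_prop]

theorem IsCutIn.inter_arcs (hM : IsCutIn tl hd A s t M) : IsCutIn tl hd A s t (M ∩ A) := by
  intro p hp
  obtain ⟨e, hep, heM⟩ := hM p hp
  exact ⟨e, hep, heM, hp.2 e hep⟩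

theorem IsCutIn.sdiff_singleton_iff (hM : IsCutIn tl hd A s t M) (he : e ∈ A) :
    IsCutIn tl hd A s t (M \ {e}) ↔
      ¬ (tl e ∈ sourceSide tl hd A s M ∧ hd e ∈ targetSide tl hd A t M) := by
  have hrestore : A \ (M \ {e}) = insert e (A \ M) := by
    rw [Set.sdiff_sdiff_right, Set.inter_singleton_of_mem he, Set.union_singleton]
  rw [isCutIn_iff_not_reaches, hrestore, reaches_insert_iff,
    or_iff_right (isCutIn_iff_not_reaches.1 hM), mem_sourceSide_iff, mem_targetSide_iff]

namespace IsMinimalCutIn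

theorem subset_arcs (hM : IsMinimalCutIn tl hd A s t M) : M ⊆ A := by
  by_contra hMA
  exact hM.2 (M ∩ A) (Set.inter_ssubset_left_iff.2 hMA) hM.1.inter_arcs

theorem mem_iff_not_isCutIn_sdiff_singleton (hM : IsMinimalCutIn tl hd A s t M) :
    e ∈ M ↔ ¬ IsCutIn tl hd A s t (M \ {e}) := by
  refine ⟨fun he => hM.2 _ (Set.sdiff_singleton_ssubset.2 he), fun hcut => ?_⟩
  by_contra he
  exact hcut ((Set.sdiff_singleton_eq_self he).symm ▸ hM.1)

end IsMinimalCutIn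

end APMC

theorem minimal_cut_eq_crossing_arcs_general {V E : Type} {tl hd : E → V} {A M : Set E} {s t : V}
    (hM : IsMinimalCutIn tl hd A s t M) :
    M = {e ∈ A | tl e ∈ sourceSide tl hd A s M ∧ hd e ∈ targetSide tl hd A t M} := by
  ext e
  calc
    e ∈ M ↔ e ∈ A ∧ e ∈ M := (and_iff_right_of_imp fun he => hM.subset_arcs he).symm
    _ ↔ e ∈ A ∧ (tl e ∈ sourceSide tl hd A s M ∧ hd e ∈ targetSide tl hd A t M) :=
      and_congr_right fun he => by
        rw [hM.mem_iff_not_isCutIn_sdiff_singleton, hM.1.sdiff_singleton_iff he, not_not]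

/-- A minimal `s`-`t` cut `M` is exactly the set of arcs with tail in the source side
`S_M` and head in the target side `T_M`. -/
theorem minimal_cut_eq_crossing_arcs {V E : Type} [Fintype V] [Fintype E]
    (tl hd : E → V) (s t : V) (hst : s ≠ t) (M : Set E)
    (hM : IsMinimalCutIn tl hd Set.univ s t M) :
    M = {e : E | tl e ∈ sourceSide tl hd Set.univ s M ∧
                 hd e ∈ targetSide tl hd Set.univ t M} := by
  simpa only [Set.mem_univ, true_and] using minimal_cut_eq_crossing_arcs_general hM
end

section
/- Let G be a directed multigraph with distinct vertices s, t. For every k ≥ 1, the number of s-t-latest s-t k-cuts is at most the Catalan number C_{k-1} = (1/k)·binom(2k-2, k-1), and the number of s-t-latest s-t ≤k-cuts is at most 4^k. -/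
open APMC

namespace APMC

open scoped Finset

/-! ### Ballot numbers -/

section Ballot

open PowerSeries

/-- The ballot numbers, encoded as the coefficients of the powers of the Catalan series;
`ballot d l` bounds the number of latest sides entered by `d + l` arcs when the minimum cut size
is `l`. -/
noncomputable def ballot (d l : ℕ) : ℕ := coeff d (catalanSeries ^ l)

lemma ballot_zero_left (l : ℕ) : ballot 0 l = 1 := by
  simp [ballot]

lemma ballot_one_right (d : ℕ) : ballot d 1 = catalan d := by
  rw [ballot, pow_one, catalanSeries_coeff]

lemma ballot_succ_succ (d l : ℕ) :
    ballot (d + 1) (l + 1) = ballot (d + 1) l + ballot d (l + 2) := by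
  have hpow : catalanSeries ^ (l + 1) = catalanSeries ^ l + catalanSeries ^ (l + 2) * X := by
    calc catalanSeries ^ (l + 1) = catalanSeries ^ l * (catalanSeries ^ 2 * X + 1) := by
          rw [catalanSeries_sq_mul_X_add_one, pow_succ]
      _ = catalanSeries ^ l + catalanSeries ^ (l + 2) * X := by ring
  rw [ballot, hpow, map_add, coeff_succ_mul_X, ballot, ballot]

lemma catalan_le_four_pow (d : ℕ) : catalan d ≤ 4 ^ d :=
  calc catalan d ≤ d.centralBinom := catalan_eq_centralBinom_div d ▸ Nat.div_le_self _ _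
    _ ≤ 2 ^ (2 * d) := Nat.choose_le_two_pow _ _
    _ = 4 ^ d := by rw [pow_mul]; norm_num

end Ballot

/-! ### Sides of cuts -/

section Sides

variable {V : Type*} {S : Set V} {t : V} {U W : Set V}

/-- A side of a cut separating the source set `S` from `t`: a vertex set containing `t` and no
source. -/
structure IsSide (S : Set V) (t : V) (U : Set V) : Prop where
  mem : t ∈ U
  disjoint : Disjoint U S

lemma IsSide.inter (hU : IsSide S t U) (hW : IsSide S t W) : IsSide S t (U ∩ W) :=
  ⟨⟨hU.mem, hW.mem⟩, hU.disjoint.mono_left Set.inter_subset_left⟩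

lemma IsSide.union (hU : IsSide S t U) (hW : IsSide S t W) : IsSide S t (U ∪ W) :=
  ⟨Or.inl hU.mem, hU.disjoint.union_left hW.disjoint⟩

lemma isSide_insert {v : V} : IsSide (insert v S) t U ↔ v ∉ U ∧ IsSide S t U := by
  constructor
  · rintro ⟨ht, hU⟩
    exact ⟨(Set.disjoint_insert_right.1 hU).1, ht, (Set.disjoint_insert_right.1 hU).2⟩
  · rintro ⟨hv, ht, hU⟩
    exact ⟨ht, Set.disjoint_insert_right.2 ⟨hv, hU⟩⟩

end Sides

/-! ### Entering arcs and submodularity -/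

section Branching

variable {V E : Type*} (tl hd : E → V) (A : Finset E)

open Classical in
/-- The arcs of `A` entering the vertex set `T`, `δ(T)` in the comments. -/
noncomputable def entering (T : Set V) : Finset E :=
  {e ∈ A | tl e ∉ T ∧ hd e ∈ T}

variable {tl hd A} in
lemma mem_entering {e : E} {T : Set V} :
    e ∈ entering tl hd A T ↔ e ∈ A ∧ tl e ∉ T ∧ hd e ∈ T := by
  simp only [entering, Finset.mem_filter]

lemma card_entering_submodular (X Y : Set V) :
    #(entering tl hd A (X ∩ Y)) + #(entering tl hd A (X ∪ Y)) ≤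
      #(entering tl hd A X) + #(entering tl hd A Y) := by
  classical
  have hunion : entering tl hd A (X ∩ Y) ∪ entering tl hd A (X ∪ Y) ⊆
      entering tl hd A X ∪ entering tl hd A Y := by
    intro e
    simp only [mem_entering, Finset.mem_union, Set.mem_union, Set.mem_inter_iff]
    tauto
  have hinter : entering tl hd A (X ∩ Y) ∩ entering tl hd A (X ∪ Y) ⊆
      entering tl hd A X ∩ entering tl hd A Y := by
    intro e
    simp only [mem_entering, Finset.mem_inter, Set.mem_union, Set.mem_inter_iff]
    tauto
  rw [← Finset.card_union_add_card_inter, ← Finset.card_union_add_card_inter (entering tl hd A X)]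
  exact Nat.add_le_add (Finset.card_le_card hunion) (Finset.card_le_card hinter)

lemma entering_erase [DecidableEq E] (e : E) (T : Set V) :
    entering tl hd (A.erase e) T = (entering tl hd A T).erase e := by
  ext f
  simp only [mem_entering, Finset.mem_erase, and_assoc]

lemma card_entering_le_erase_add_one [DecidableEq E] (e : E) (T : Set V) :
    #(entering tl hd A T) ≤ #(entering tl hd (A.erase e) T) + 1 := by
  rw [entering_erase, ← Nat.sub_le_iff_le_add]
  exact Finset.pred_card_le_card_erase

/-! ### Counting latest sides by branching -/

/-- Every cut separating `S` from `t` in the arc set `A` has at least `l` arcs. -/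
def ArcConnected (S : Set V) (t : V) (l : ℕ) : Prop :=
  ∀ U, IsSide S t U → l ≤ #(entering tl hd A U)

/-- `T` is the target side of a latest minimal cut, stated without paths: its proper subsets
containing `t` are entered by more arcs than `T`, and no cut is properly contained in `δ(T)`. -/
structure IsLatestSide (S : Set V) (t : V) (T : Set V) : Prop extends IsSide S t T where
  card_lt_of_ssubset : ∀ U, IsSide S t U → U ⊂ T →
    #(entering tl hd A T) < #(entering tl hd A U)
  not_entering_ssubset : ∀ U, IsSide S t U → ¬ entering tl hd A U ⊂ entering tl hd A T

variable {tl hd A} {S : Set V} {t : V} {T : Set V} {l : ℕ}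

lemma ArcConnected.erase_arc [DecidableEq E] (h : ArcConnected tl hd A S t (l + 1)) (e : E) :
    ArcConnected tl hd (A.erase e) S t l := fun U hU =>
  Nat.le_of_succ_le_succ ((h U hU).trans (card_entering_le_erase_add_one tl hd A e U))

/-- Uncrossing with a minimum cut side `C`: otherwise `T ∩ C` is a smaller side than `T` and is not
entered by more arcs. -/
lemma IsLatestSide.subset_of_card_eq (hT : IsLatestSide tl hd A S t T)
    (hl : ArcConnected tl hd A S t l) {C : Set V} (hC : IsSide S t C)
    (hCl : #(entering tl hd A C) = l) : T ⊆ C := by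
  by_contra hTC
  have hinter := hT.card_lt_of_ssubset (T ∩ C) (hT.toIsSide.inter hC)
    (Set.inter_ssubset_left_iff.2 hTC)
  have hunion := hl (T ∪ C) (hT.toIsSide.union hC)
  have hsub := card_entering_submodular tl hd A T C
  omega

lemma subsingleton_isLatestSide (hl : ArcConnected tl hd A S t l) :
    {T | IsLatestSide tl hd A S t T ∧ #(entering tl hd A T) = l}.Subsingleton :=
  fun _ hT _ hT' => (hT.1.subset_of_card_eq hl hT'.1.toIsSide hT'.2).antisymm
    (hT'.1.subset_of_card_eq hl hT.1.toIsSide hT.2)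

lemma IsLatestSide.card_entering_eq_zero (hT : IsLatestSide tl hd A S t T)
    (h : ¬ ArcConnected tl hd A S t 1) : #(entering tl hd A T) = 0 := by
  simp only [ArcConnected, not_forall, Nat.one_le_iff_ne_zero, not_not] at h
  obtain ⟨U, hU, hU0⟩ := h
  have hne := hT.not_entering_ssubset U hU
  rw [Finset.card_eq_zero.1 hU0, Finset.empty_ssubset, Finset.not_nonempty_iff_eq_empty] at hne
  rw [hne, Finset.card_empty]

lemma setOf_isLatestSide_eq_empty (h : ¬ ArcConnected tl hd A S t 1) (d : ℕ) :
    {T | IsLatestSide tl hd A S t T ∧ #(entering tl hd A T) = d + 1} = ∅ :=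
  Set.eq_empty_of_forall_notMem fun _ ⟨hT, hTd⟩ =>
    d.succ_ne_zero (hTd.symm.trans (hT.card_entering_eq_zero h))

lemma IsLatestSide.erase_arc [DecidableEq E] {e : E} (hT : IsLatestSide tl hd A S t T)
    (he : e ∈ entering tl hd A T) : IsLatestSide tl hd (A.erase e) S t T where
  toIsSide := hT.toIsSide
  card_lt_of_ssubset U hU hUT := by
    have hlt := hT.card_lt_of_ssubset U hU hUT
    have hle := card_entering_le_erase_add_one tl hd A e U
    have hcard := Finset.card_erase_add_one he
    rw [entering_erase tl hd A e T]
    omega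
  not_entering_ssubset U hU hUT := by
    rw [entering_erase, entering_erase, Finset.ssubset_iff_subset_ne] at hUT
    have hsub : entering tl hd A U ⊆ entering tl hd A T :=
      (Finset.erase_subset_iff_of_mem he).1 (hUT.1.trans (Finset.erase_subset e _))
    exact hT.not_entering_ssubset U hU (hsub.ssubset_of_ne fun h => hUT.2 (by rw [h]))

lemma IsLatestSide.insert_source {v : V} (hT : IsLatestSide tl hd A S t T) (hv : v ∉ T) :
    IsLatestSide tl hd A (insert v S) t T where
  toIsSide := isSide_insert.2 ⟨hv, hT.toIsSide⟩
  card_lt_of_ssubset U hU := hT.card_lt_of_ssubset U (isSide_insert.1 hU).2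
  not_entering_ssubset U hU := hT.not_entering_ssubset U (isSide_insert.1 hU).2

lemma exists_side_arcConnected_insert_head (hl : ArcConnected tl hd A S t l)
    (hl' : ¬ ArcConnected tl hd A S t (l + 1)) :
    ∃ C, IsSide S t C ∧ #(entering tl hd A C) = l ∧
      ∀ e ∈ entering tl hd A C, ArcConnected tl hd A (insert (hd e) S) t (l + 1) := by
  have hex : ∃ C, IsSide S t C ∧ #(entering tl hd A C) = l := by
    simp only [ArcConnected, not_forall, not_le, Nat.lt_succ_iff] at hl'
    obtain ⟨C, hC, hCl⟩ := hl'
    exact ⟨C, hC, hCl.antisymm (hl C hC)⟩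
  classical
  -- The arcs ending in `C` are minimized rather than `C` itself, because `V` may be infinite.
  let ending (C : Set V) : Finset E := {e ∈ A | hd e ∈ C}
  have mem_ending {C : Set V} {f : E} : f ∈ ending C ↔ f ∈ A ∧ hd f ∈ C := Finset.mem_filter
  obtain ⟨C, ⟨hC, hCl⟩, hCmin⟩ := exists_minimalFor_of_wellFoundedLT _ ending hex
  refine ⟨C, hC, hCl, fun e he U hU => ?_⟩
  obtain ⟨heU, hU⟩ := isSide_insert.1 hU
  by_contra! hlt
  have hunion := hl (U ∪ C) (hU.union hC)
  have hinter := hl (U ∩ C) (hU.inter hC)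
  have hsub := card_entering_submodular tl hd A U C
  have hmin : ending C ⊆ ending (U ∩ C) := hCmin ⟨hU.inter hC, by omega⟩ fun f hf =>
    mem_ending.2 ⟨(mem_ending.1 hf).1, (mem_ending.1 hf).2.2⟩
  obtain ⟨heA, -, heC⟩ := mem_entering.1 he
  exact heU (mem_ending.1 (hmin (mem_ending.2 ⟨heA, heC⟩))).2.1

lemma IsLatestSide.erase_arc_or_insert_source [DecidableEq E] (hT : IsLatestSide tl hd A S t T)
    (hl : ArcConnected tl hd A S t l) {C : Set V} (hC : IsSide S t C)
    (hCl : #(entering tl hd A C) = l) {e : E} (he : e ∈ entering tl hd A C) :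
    (IsLatestSide tl hd (A.erase e) S t T ∧
      #(entering tl hd (A.erase e) T) + 1 = #(entering tl hd A T)) ∨
    IsLatestSide tl hd A (insert (hd e) S) t T := by
  obtain ⟨heA, htl, -⟩ := mem_entering.1 he
  by_cases hhd : hd e ∈ T
  · have htlT : tl e ∉ T := fun h => htl (hT.subset_of_card_eq hl hC hCl h)
    have heT : e ∈ entering tl hd A T := mem_entering.2 ⟨heA, htlT, hhd⟩
    exact Or.inl ⟨hT.erase_arc heT, by rw [entering_erase, Finset.card_erase_add_one heT]⟩
  · exact Or.inr (hT.insert_source hhd)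

theorem encard_isLatestSide_le_ballot (d l : ℕ) (A : Finset E) (S : Set V)
    (hl : ArcConnected tl hd A S t l) (hzero : l = 0 → ¬ ArcConnected tl hd A S t 1) :
    {T | IsLatestSide tl hd A S t T ∧ #(entering tl hd A T) = d + l}.encard ≤ ballot d l := by
  match d, l with
  | 0, l =>
    rw [ballot_zero_left, zero_add, Nat.cast_one, Set.encard_le_one_iff_subsingleton]
    exact subsingleton_isLatestSide hl
  | d + 1, 0 =>
    rw [add_zero, setOf_isLatestSide_eq_empty (hzero rfl), Set.encard_empty]
    exact zero_le
  | d + 1, l + 1 =>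
    classical
    rw [ballot_succ_succ, Nat.cast_add]
    by_cases hl' : ArcConnected tl hd A S t (l + 2)
    · have hinc := encard_isLatestSide_le_ballot d (l + 2) A S hl' (by simp)
      rw [show d + (l + 2) = d + 1 + (l + 1) by ring] at hinc
      exact hinc.trans le_add_self
    · obtain ⟨C, hC, hCl, hins⟩ := exists_side_arcConnected_insert_head hl hl'
      obtain ⟨e, he⟩ : (entering tl hd A C).Nonempty := Finset.card_pos.1 (by omega)
      have herase := encard_isLatestSide_le_ballot (d + 1) l (A.erase e) S (hl.erase_arc e) <| by
        rintro rfl h1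
        have hCe := h1 C hC
        rw [entering_erase, Finset.card_erase_of_mem he, hCl] at hCe
        omega
      have hinsert := encard_isLatestSide_le_ballot d (l + 2) A _ (hins e he) (by simp)
      refine le_trans (Set.encard_le_encard ?_)
        ((Set.encard_union_le _ _).trans (add_le_add herase hinsert))
      rintro T ⟨hT, hTd⟩
      rcases hT.erase_arc_or_insert_source hl hC hCl he with ⟨hT', hcard⟩ | hT'
      · exact Or.inl ⟨hT', by omega⟩
      · exact Or.inr ⟨hT', by omega⟩

theorem encard_isLatestSide_le_catalan (tl hd : E → V) (A : Finset E) (S : Set V) (t : V) (d : ℕ) :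
    {T | IsLatestSide tl hd A S t T ∧ #(entering tl hd A T) = d + 1}.encard ≤ catalan d := by
  by_cases h1 : ArcConnected tl hd A S t 1
  · rw [← ballot_one_right]
    exact encard_isLatestSide_le_ballot d 1 A S h1 (by simp)
  · rw [setOf_isLatestSide_eq_empty h1, Set.encard_empty]
    exact zero_le

end Branching

/-! ### Latest minimal cuts and their target sides -/

section Cuts

variable {V E : Type} {tl hd : E → V} {A : Finset E} {s t : V} {U : Set V} {M : Set E}

lemma Walk.exists_entering {x : V} {p : List E} (h : Walk tl hd x t p) (ht : t ∈ U)
    (hx : x ∉ U) : ∃ e ∈ p, tl e ∉ U ∧ hd e ∈ U := by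
  induction h with
  | nil => exact absurd ht hx
  | cons e _ ih =>
    by_cases he : hd e ∈ U
    · exact ⟨e, List.mem_cons_self, hx, he⟩
    · obtain ⟨f, hf, hfU⟩ := ih ht he
      exact ⟨f, List.mem_cons_of_mem _ hf, hfU⟩

lemma WalkIn.exists_mem_entering {x : V} {p : List E} (h : WalkIn tl hd A x t p) (ht : t ∈ U)
    (hx : x ∉ U) : ∃ e ∈ p, e ∈ entering tl hd A U := by
  obtain ⟨e, hep, heU⟩ := h.1.exists_entering ht hx
  exact ⟨e, hep, mem_entering.2 ⟨h.2 e hep, heU⟩⟩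

lemma isCutIn_entering (hU : IsSide {s} t U) : IsCutIn tl hd A s t (entering tl hd A U) :=
  fun _ hp => hp.exists_mem_entering hU.mem (Set.disjoint_singleton_right.1 hU.disjoint)

lemma targetSide_entering_subset (ht : t ∈ U) :
    targetSide tl hd A t (entering tl hd A U) ⊆ U := by
  rintro x ⟨p, hp, havoid⟩
  by_contra hx
  obtain ⟨e, hep, heU⟩ := hp.exists_mem_entering ht hx
  exact havoid e hep heU

lemma IsCutIn.isSide_targetSide {A : Set E} (hM : IsCutIn tl hd A s t M) :
    IsSide {s} t (targetSide tl hd A t M) where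
  mem := ⟨[], ⟨Walk.nil t, by simp⟩, by simp⟩
  disjoint := Set.disjoint_singleton_right.2 fun ⟨p, hp, havoid⟩ => by
    obtain ⟨e, hep, heM⟩ := hM p hp
    exact havoid e hep heM

lemma entering_targetSide_subset :
    (entering tl hd A (targetSide tl hd A t M) : Set E) ⊆ M := by
  intro e he
  obtain ⟨heA, htl, p, hp, havoid⟩ := mem_entering.1 he
  by_contra heM
  exact htl ⟨e :: p, ⟨Walk.cons e hp.1, List.forall_mem_cons.2 ⟨heA, hp.2⟩⟩,
    List.forall_mem_cons.2 ⟨heM, havoid⟩⟩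

lemma IsMinimalCutIn.entering_targetSide (hM : IsMinimalCutIn tl hd A s t M) :
    (entering tl hd A (targetSide tl hd A t M) : Set E) = M :=
  entering_targetSide_subset.eq_of_not_ssubset fun h =>
    hM.2 _ h (isCutIn_entering hM.1.isSide_targetSide)

lemma IsMinimalCutIn.card_entering_targetSide (hM : IsMinimalCutIn tl hd A s t M) :
    #(entering tl hd A (targetSide tl hd A t M)) = M.ncard := by
  rw [← Set.ncard_coe_finset, hM.entering_targetSide]

lemma injOn_targetSide : Set.InjOn (targetSide tl hd A t) {M | IsMinimalCutIn tl hd A s t M} :=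
  fun M hM M' hM' h => by
    rw [← hM.entering_targetSide, ← hM'.entering_targetSide, h]

lemma IsLatestIn.isLatestSide_targetSide (hlate : IsLatestIn tl hd A s t M)
    (hM : IsMinimalCutIn tl hd A s t M) :
    IsLatestSide tl hd A {s} t (targetSide tl hd A t M) where
  toIsSide := hM.1.isSide_targetSide
  card_lt_of_ssubset U hU hUT := by
    by_contra! hle
    have hsub : targetSide tl hd A t (entering tl hd A U) ⊂ targetSide tl hd A t M :=
      (targetSide_entering_subset hU.mem).trans_ssubset hUT
    refine hlate.2 ⟨_, isCutIn_entering hU, ⟨hsub.subset, hsub.ne⟩, ?_⟩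
    rwa [Set.ncard_coe_finset, ← hM.card_entering_targetSide]
  not_entering_ssubset U hU hUT := by
    rw [← Finset.coe_ssubset, hM.entering_targetSide] at hUT
    exact hM.2 _ hUT (isCutIn_entering hU)

theorem encard_latest_cuts_ncard_eq_le_catalan (tl hd : E → V) (A : Finset E) (s t : V) (d : ℕ) :
    {M | IsLatestIn tl hd A s t M ∧ IsMinimalCutIn tl hd A s t M ∧ M.ncard = d + 1}.encard ≤
      catalan d := by
  refine le_trans (Set.encard_le_encard_of_injOn ?_ (injOn_targetSide.mono fun _ hM => hM.2.1))
    (encard_isLatestSide_le_catalan tl hd A {s} t d)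
  rintro M ⟨hlate, hM, hMd⟩
  exact ⟨hlate.isLatestSide_targetSide hM, hM.card_entering_targetSide.trans hMd⟩

lemma IsMinimalCutIn.finite (hM : IsMinimalCutIn tl hd A s t M) : M.Finite :=
  hM.entering_targetSide ▸ Finset.finite_toSet _

theorem encard_latest_cuts_ncard_le_le_four_pow (tl hd : E → V) (A : Finset E) (s t : V) (k : ℕ) :
    {M | IsLatestIn tl hd A s t M ∧ IsMinimalCutIn tl hd A s t M ∧ M.ncard ≤ k}.encard ≤
      (4 ^ k : ℕ) := by
  induction k with
  | zero =>
    rw [pow_zero, Nat.cast_one, Set.encard_le_one_iff]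
    rintro M M' ⟨-, hM, hM0⟩ ⟨-, hM', hM'0⟩
    rw [Nat.le_zero, Set.ncard_eq_zero hM.finite] at hM0
    rw [Nat.le_zero, Set.ncard_eq_zero hM'.finite] at hM'0
    rw [hM0, hM'0]
  | succ k ih =>
    have hcat : (catalan k : ℕ∞) ≤ (4 ^ k : ℕ) := Nat.cast_le.2 (catalan_le_four_pow k)
    have hsplit : {M | IsLatestIn tl hd A s t M ∧ IsMinimalCutIn tl hd A s t M ∧
          M.ncard ≤ k + 1} =
        {M | IsLatestIn tl hd A s t M ∧ IsMinimalCutIn tl hd A s t M ∧ M.ncard ≤ k} ∪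
        {M | IsLatestIn tl hd A s t M ∧ IsMinimalCutIn tl hd A s t M ∧ M.ncard = k + 1} := by
      simp only [Nat.le_succ_iff, and_or_left, Set.ofPred_or, Nat.succ_eq_add_one]
    rw [hsplit]
    calc _ ≤ ((4 ^ k : ℕ) : ℕ∞) + (4 ^ k : ℕ) := (Set.encard_union_le _ _).trans
          (add_le_add ih ((encard_latest_cuts_ncard_eq_le_catalan tl hd A s t k).trans hcat))
      _ ≤ (4 ^ (k + 1) : ℕ) := by
          rw [← Nat.cast_add, Nat.cast_le, pow_succ]
          omega

end Cuts

end APMC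

theorem card_latest_cuts_le_general {V E : Type} (tl hd : E → V) {A : Set E} (hA : A.Finite)
    (s t : V) (k : ℕ) (hk : 1 ≤ k) :
    {M : Set E | IsLatestIn tl hd A s t M ∧
        IsMinimalCutIn tl hd A s t M ∧ M.ncard = k}.encard ≤ catalan (k - 1) ∧
    {M : Set E | IsLatestIn tl hd A s t M ∧
        IsMinimalCutIn tl hd A s t M ∧ M.ncard ≤ k}.encard ≤ (4 ^ k : ℕ) := by
  lift A to Finset E using hA
  obtain ⟨d, rfl⟩ := Nat.exists_eq_add_of_le' hk
  exact ⟨encard_latest_cuts_ncard_eq_le_catalan tl hd A s t d,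
    encard_latest_cuts_ncard_le_le_four_pow tl hd A s t (d + 1)⟩

/-- The number of `s`-`t`-latest `s`-`t` `k`-cuts is at most the Catalan number
`C_{k-1}`, and the number of `s`-`t`-latest `s`-`t` `≤k`-cuts is at most `4^k`. -/
theorem card_latest_cuts_le {V E : Type} [Fintype V] [Fintype E]
    (tl hd : E → V) (s t : V) (hst : s ≠ t) (k : ℕ) (hk : 1 ≤ k) :
    {M : Set E | IsLatestIn tl hd Set.univ s t M ∧
        IsMinimalCutIn tl hd Set.univ s t M ∧ M.ncard = k}.ncard ≤ catalan (k - 1) ∧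
    {M : Set E | IsLatestIn tl hd Set.univ s t M ∧
        IsMinimalCutIn tl hd Set.univ s t M ∧ M.ncard ≤ k}.ncard ≤ 4 ^ k :=
  (card_latest_cuts_le_general tl hd Set.finite_univ s t k hk).imp
    ENat.toNat_le_of_le_natCast ENat.toNat_le_of_le_natCast
end

section
/- Let G be a directed multigraph, let A₁, A₂ be an arc split of G, and let s, t be distinct vertices. Then every set M ⊆ E that is split-covering with respect to A₁, A₂ and s, t is an s-t cut in G. -/
open APMC

/-!
No arc of `A₁` follows an arc of `A₂`, so a walk that has left `A₁` never returns to it: every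
`s`-`t` walk is an `s`-`v` walk in `(V, A₁)` followed by a `v`-`t` walk in `(V, A₂)`, for some
vertex `v`. The covering condition at this `v` makes `M` an `s`-`v` cut in `(V, A₁)` or a `v`-`t`
cut in `(V, A₂)`, where an unreachable pair of vertices is separated by every set, so `M` meets one
of the two parts.
-/

namespace APMC

variable {V E : Type} {tl hd : E → V} {A A₁ A₂ M M' : Set E} {s t u v : V} {p : List E}

theorem WalkIn.nil (v : V) : WalkIn tl hd A v v [] :=
  ⟨.nil v, by simp⟩

theorem WalkIn.cons {e : E} (he : e ∈ A) (hp : WalkIn tl hd A (hd e) v p) :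
    WalkIn tl hd A (tl e) v (e :: p) :=
  ⟨.cons e hp.1, List.forall_mem_cons.2 ⟨he, hp.2⟩⟩

theorem WalkIn.eq_and_eq_nil_of_forall_ne_tail (hu : ∀ e ∈ A, u ≠ tl e)
    (hp : WalkIn tl hd A u v p) : u = v ∧ p = [] := by
  obtain ⟨hwalk, hA⟩ := hp
  cases hwalk with
  | nil => exact ⟨rfl, rfl⟩
  | cons e _ => exact absurd rfl (hu e (hA e List.mem_cons_self))

theorem WalkIn.exists_eq_append_of_union (hno : ∀ e₁ ∈ A₂, ∀ e₂ ∈ A₁, hd e₁ ≠ tl e₂)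
    (hp : WalkIn tl hd (A₁ ∪ A₂) s t p) :
    ∃ v p₁ p₂, p = p₁ ++ p₂ ∧ WalkIn tl hd A₁ s v p₁ ∧ WalkIn tl hd A₂ v t p₂ := by
  obtain ⟨hwalk, hA⟩ := hp
  induction hwalk with
  | nil v => exact ⟨v, [], [], rfl, .nil v, .nil v⟩
  | cons e _ ih =>
    obtain ⟨he, hA⟩ := List.forall_mem_cons.1 hA
    obtain ⟨v, p₁, p₂, rfl, h₁, h₂⟩ := ih hA
    rcases he with he | he
    · exact ⟨v, e :: p₁, p₂, rfl, h₁.cons he, h₂⟩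
    · obtain ⟨rfl, rfl⟩ := h₁.eq_and_eq_nil_of_forall_ne_tail (hno e he)
      exact ⟨tl e, [], e :: p₂, rfl, .nil _, h₂.cons he⟩

theorem IsCutIn.mono (hMM' : M ⊆ M') (hM : IsCutIn tl hd A s t M) : IsCutIn tl hd A s t M' :=
  fun p hp ↦ (hM p hp).imp fun _ ⟨hep, heM⟩ ↦ ⟨hep, hMM' heM⟩

theorem isCutIn_of_not_reaches (h : ¬ Reaches tl hd A s t) : IsCutIn tl hd A s t M :=
  fun p hp ↦ absurd ⟨p, hp⟩ h

theorem isCutIn_union (hno : ∀ e₁ ∈ A₂, ∀ e₂ ∈ A₁, hd e₁ ≠ tl e₂)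
    (hM : ∀ v, IsCutIn tl hd A₁ s v M ∨ IsCutIn tl hd A₂ v t M) :
    IsCutIn tl hd (A₁ ∪ A₂) s t M := by
  intro p hp
  obtain ⟨v, p₁, p₂, rfl, h₁, h₂⟩ := hp.exists_eq_append_of_union hno
  rcases hM v with hcut | hcut
  · obtain ⟨e, he, heM⟩ := hcut p₁ h₁
    exact ⟨e, List.mem_append_left p₂ he, heM⟩
  · obtain ⟨e, he, heM⟩ := hcut p₂ h₂
    exact ⟨e, List.mem_append_right p₁ he, heM⟩

theorem SplitCovering.isCutIn_or_isCutIn (hM : SplitCovering tl hd A₁ A₂ s t M) (v : V) :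
    IsCutIn tl hd A₁ s v M ∨ IsCutIn tl hd A₂ v t M := by
  obtain ⟨Mv, hMv, ⟨-, -, h₁ | h₂⟩ | hearliest | hlatest⟩ := hM v
  · exact .inl (isCutIn_of_not_reaches h₁)
  · exact .inr (isCutIn_of_not_reaches h₂)
  · exact .inl (hearliest.1.mono hMv)
  · exact .inr (hlatest.1.mono hMv)

end APMC

theorem splitCovering_isCut_general {V E : Type} {tl hd : E → V} {A₁ A₂ : Set E}
    (hsplit : ArcSplit tl hd A₁ A₂) {s t : V} {M : Set E}
    (hM : SplitCovering tl hd A₁ A₂ s t M) : IsCutIn tl hd Set.univ s t M := by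
  obtain ⟨hcover, -, hno⟩ := hsplit
  exact hcover ▸ isCutIn_union hno hM.isCutIn_or_isCutIn

/-- Every split-covering set with respect to an arc split `A₁, A₂` and vertices
`s`, `t` is an `s`-`t` cut. -/
theorem splitCovering_isCut {V E : Type} [Fintype V] [Fintype E]
    (tl hd : E → V) (A₁ A₂ : Set E) (hsplit : ArcSplit tl hd A₁ A₂)
    (s t : V) (hst : s ≠ t) (M : Set E)
    (hM : SplitCovering tl hd A₁ A₂ s t M) :
    IsCutIn tl hd Set.univ s t M :=
  splitCovering_isCut_general hsplit hM
end

section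
/- For any instance F₁,…,F_c of the Witness Superset problem, where each family Fᵢ contains at most K sets, each of size at most k, the number of solutions (sets W ⊆ U satisfying [cover], [size], and [minimal]) is at most K^k. -/
/-!
Solutions are enumerated by a bounded search tree whose nodes are partial witnesses `S`, the root
being `∅`. If `S` already satisfies [cover], then by minimality the only solution that can contain
`S` is `S` itself. Otherwise some family `F i` has no member inside `S`, and every solution
containing `S` contains `S ∪ A` for one of the at most `K` sets `A ∈ F i`. Each branch enlarges
`S`, and a solution has at most `k` elements, so the tree has depth at most `k`.
-/

namespace WitnessSuperset

open Finset

variable {ι U : Type*} {F : ι → Finset (Finset U)} {K k : ℕ} {S W : Finset U}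

/-- The condition [cover] of the Witness Superset problem, for families indexed by a type `ι` over
a universe `U`. -/
def Covers (F : ι → Finset (Finset U)) (W : Finset U) : Prop :=
  ∀ i, ∃ A ∈ F i, A ⊆ W

/-- The solutions of the Witness Superset problem with size bound `k`: the sets satisfying
[cover], [size] and [minimal], in this order. -/
def solutions (F : ι → Finset (Finset U)) (k : ℕ) : Set (Finset U) :=
  {W | Covers F W ∧ #W ≤ k ∧ ∀ W' ⊂ W, ¬ Covers F W'}

theorem minimal_covers_of_mem_solutions (hW : W ∈ solutions F k) : Minimal (Covers F) W :=
  minimal_iff_forall_lt.2 ⟨hW.1, hW.2.2⟩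

theorem solutions_inter_Ici_subset_singleton_of_covers (hS : Covers F S) :
    solutions F k ∩ Set.Ici S ⊆ {S} :=
  fun _ ⟨hW, hSW⟩ => ((minimal_covers_of_mem_solutions hW).eq_of_le hS hSW).symm

theorem solutions_inter_Ici_subset_singleton_of_le_card (hS : k ≤ #S) :
    solutions F k ∩ Set.Ici S ⊆ {S} :=
  fun _ ⟨⟨_, hsize, _⟩, hSW⟩ => (eq_of_subset_of_card_le hSW (hsize.trans hS)).symm

theorem solutions_inter_Ici_subset_biUnion [DecidableEq U] (F : ι → Finset (Finset U)) (k : ℕ)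
    (S : Finset U) (i : ι) :
    solutions F k ∩ Set.Ici S ⊆ ⋃ A ∈ F i, solutions F k ∩ Set.Ici (S ∪ A) := by
  rintro W ⟨hW, hSW⟩
  obtain ⟨A, hA, hAW⟩ := hW.1 i
  exact Set.mem_biUnion hA ⟨hW, union_subset hSW hAW⟩

theorem encard_solutions_inter_Ici_le (hK : 1 ≤ K) (hF : ∀ i, #(F i) ≤ K) {n : ℕ}
    (hn : k ≤ #S + n) : (solutions F k ∩ Set.Ici S).encard ≤ K ^ n := by
  classical
  induction n generalizing S with
  | zero =>
    simpa using Set.encard_le_encard (solutions_inter_Ici_subset_singleton_of_le_card hn)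
  | succ n ih =>
    by_cases hS : Covers F S
    · calc (solutions F k ∩ Set.Ici S).encard
        _ ≤ Set.encard {S} :=
          Set.encard_le_encard (solutions_inter_Ici_subset_singleton_of_covers hS)
        _ = 1 := Set.encard_singleton S
        _ ≤ (K : ℕ∞) ^ (n + 1) := mod_cast Nat.one_le_pow _ _ hK
    obtain ⟨i, hi⟩ : ∃ i, ∀ A ∈ F i, ¬ A ⊆ S := by
      simpa only [Covers, not_forall, not_exists, not_and] using hS
    have hbranch : ∀ A ∈ F i, (solutions F k ∩ Set.Ici (S ∪ A)).encard ≤ K ^ n := by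
      intro A hA
      have hlt : #S < #(S ∪ A) := card_lt_card (left_lt_sup.2 (hi A hA))
      exact ih (by lia)
    calc (solutions F k ∩ Set.Ici S).encard
      _ ≤ (⋃ A ∈ F i, solutions F k ∩ Set.Ici (S ∪ A)).encard :=
        Set.encard_le_encard (solutions_inter_Ici_subset_biUnion F k S i)
      _ ≤ ∑ A ∈ F i, (solutions F k ∩ Set.Ici (S ∪ A)).encard := set_encard_biUnion_le _ _
      _ ≤ #(F i) • (K : ℕ∞) ^ n := sum_le_card_nsmul _ _ _ hbranch
      _ ≤ K * (K : ℕ∞) ^ n := by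
        rw [nsmul_eq_mul]
        gcongr
        exact hF i
      _ = (K : ℕ∞) ^ (n + 1) := (pow_succ' _ _).symm

end WitnessSuperset

open WitnessSuperset in
theorem witnessSuperset_card_solutions_le_general {ι U : Type*} {K : ℕ} (k : ℕ) (hK : 1 ≤ K)
    {F : ι → Finset (Finset U)} (hF : ∀ i, (F i).card ≤ K) :
    (solutions F k).encard ≤ K ^ k := by
  have hroot : solutions F k ∩ Set.Ici ∅ = solutions F k :=
    Set.inter_eq_left.2 fun W _ => Finset.empty_subset W
  simpa only [hroot] using encard_solutions_inter_Ici_le hK hF (S := ∅) (Nat.le_add_left k _)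

/-- For any instance of the Witness Superset problem with `c` families, each containing
at most `K` sets of size at most `k`, the number of solutions (sets `W` satisfying
[cover], [size] and [minimal]) is at most `K ^ k`. -/
theorem witnessSuperset_card_solutions_le {U : Type} [Fintype U] [DecidableEq U]
    (c K k : ℕ) (hc : 1 ≤ c) (hK : 1 ≤ K) (hk : 1 ≤ k)
    (F : Fin c → Finset (Finset U))
    (hne : ∀ i, (F i).Nonempty)
    (hcard : ∀ i, (F i).card ≤ K)
    (hmem : ∀ i, ∀ A ∈ F i, A.card ≤ k) :
    {W : Finset U |
        (∀ i, ∃ A ∈ F i, A ⊆ W) ∧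
        W.card ≤ k ∧
        ∀ W' : Finset U, W' ⊂ W → ¬ (∀ i, ∃ A ∈ F i, A ⊆ W')}.ncard ≤ K ^ k :=
  ENat.toNat_le_of_le_natCast (mod_cast witnessSuperset_card_solutions_le_general k hK hcard)
end

section
/- Let C_slow : Fin u → Set (Fin q₁) be a d-superimposed binary code and let C₁ : Fin u → Set (Fin q₂) be a 1-superimposed binary code. Then the code C_fast : Fin u → Set (Fin q₁ × Fin q₂) defined by C_fast(x) = C_slow(x) × C₁(x) is d-superimposed. -/
/-- The encoding of a set `X` by a binary code `C` (with symbol set `Q`):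
the union of the codewords of the elements of `X`. -/
def codeUnion {u : ℕ} {Q : Type} (C : Fin u → Set Q) (X : Set (Fin u)) : Set Q :=
  ⋃ x ∈ X, C x

/-- A binary code is `d`-superimposed if the union of at most `d` codewords never
covers the codeword of an element outside the set. -/
def Superimposed {u : ℕ} {Q : Type} (d : ℕ) (C : Fin u → Set Q) : Prop :=
  ∀ X : Set (Fin u), X.ncard ≤ d → ∀ y ∉ X, ¬ C y ⊆ codeUnion C X

/-!
A map of symbols carries every covering of a codeword by other codewords to a covering of the
images, so a code is `d`-superimposed as soon as one of its images is. Since the empty set covers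
no codeword of `C₁`, these are all nonempty, and the first projection maps `C_fast` onto `C_slow`.
-/

section

variable {u d : ℕ} {Q R : Type} {C : Fin u → Set Q}

theorem image_codeUnion (f : Q → R) (C : Fin u → Set Q) (X : Set (Fin u)) :
    f '' codeUnion C X = codeUnion (fun x => f '' C x) X :=
  Set.image_iUnion₂ f fun x _ => C x

theorem Superimposed.of_image (f : Q → R) (hC : Superimposed d fun x => f '' C x) :
    Superimposed d C := by
  intro X hX y hy hcover
  refine hC X hX y hy ?_
  calc
    f '' C y ⊆ f '' codeUnion C X := Set.image_mono hcover
    _ = codeUnion (fun x => f '' C x) X := image_codeUnion f C X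

theorem Superimposed.nonempty (hC : Superimposed d C) (y : Fin u) : (C y).Nonempty := by
  have hy : ¬ C y ⊆ codeUnion C ∅ := hC ∅ (by simp) y (Set.notMem_empty y)
  exact (Set.nonempty_of_not_subset hy).mono Set.sdiff_subset

theorem product_superimposed_general {D : Fin u → Set R} (hC : Superimposed d C)
    (hD : ∀ x, (D x).Nonempty) : Superimposed d fun x => C x ×ˢ D x := by
  have fst_image : (fun x => Prod.fst '' (C x ×ˢ D x)) = C :=
    funext fun x => Set.fst_image_prod (C x) (hD x)
  exact .of_image Prod.fst (fst_image.symm ▸ hC)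

end

/-- The product of a `d`-superimposed code `C_slow` of length `q₁` with a
`1`-superimposed code `C₁` of length `q₂`, given by
`C_fast x = C_slow x ×ˢ C₁ x ⊆ Fin q₁ × Fin q₂`, is `d`-superimposed. -/
theorem product_superimposed {u q₁ q₂ : ℕ} (d : ℕ)
    (Cslow : Fin u → Set (Fin q₁)) (C₁ : Fin u → Set (Fin q₂))
    (hslow : Superimposed d Cslow) (h1 : Superimposed 1 C₁) :
    Superimposed d (fun x => Cslow x ×ˢ C₁ x) :=
  product_superimposed_general hslow h1.nonempty
end

section
/- Let G be a 4-partite graph with parts A, B, C, D and let H be the associated digraph. Let a ∈ A, d ∈ D with {a,d} ∈ E(G), and suppose there exist b* ∈ B, c* ∈ C such that a, b*, c*, d form a 4-clique in G (all six pairs are edges of G). Then there exist |B'_{a,d}| + |C'_{a,d}| + 1 pairwise internally vertex-disjoint directed paths from a to d in H; in particular NC(a,d) ≥ |B'_{a,d}| + |C'_{a,d}| + 1. -/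
/-!
Distinct two-arc paths `a → m → d` meet only in `a` and `d`, and their midpoints `m` are exactly
the elements of `B'_{a,d}` and `C'_{a,d}`. The clique adds the path `a → b* → c* → d`, which
avoids all of these midpoints: `b*` is adjacent to `d` in `G`, and `c*` is adjacent to `a` in `G`.
-/

/-- The vertex set of the digraph `H`, the disjoint union of the four parts
`A`, `B`, `C`, `D` of the `4`-partite graph `G`. -/
inductive V4 (A B C D : Type) where
  | va : A → V4 A B C D
  | vb : B → V4 A B C D
  | vc : C → V4 A B C D
  | vd : D → V4 A B C D

/-- The arc relation of the digraph `H` associated with the `4`-partite graph `G`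
whose edges between the parts are given by the relations `eAB, eBC, eCD, eAC, eBD`
(and `eAD`, which is not used by `H`): arcs `A → B`, `B → C`, `C → D` correspond to
edges of `G`, and arcs `A → C`, `B → D` correspond to non-edges of `G`. -/
def Hadj {A B C D : Type} (eAB : A → B → Prop) (eBC : B → C → Prop)
    (eCD : C → D → Prop) (eAC : A → C → Prop) (eBD : B → D → Prop) :
    V4 A B C D → V4 A B C D → Prop
  | .va x, .vb y => eAB x y
  | .vb x, .vc y => eBC x y
  | .vc x, .vd y => eCD x y
  | .va x, .vc y => ¬ eAC x y
  | .vb x, .vd y => ¬ eBD x y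
  | _, _ => False

/-- `RWalk r s t p` : `p` is the list of vertices of a directed path from `s` to `t`
in the digraph with arc relation `r`. -/
inductive RWalk {V : Type} (r : V → V → Prop) : V → V → List V → Prop
  | nil (v : V) : RWalk r v v [v]
  | cons {u v w : V} {p : List V} : r u v → RWalk r v w p → RWalk r u w (u :: p)

/-- `P` is a family of pairwise internally vertex-disjoint directed paths from `s`
to `t`: paths in the family share no vertices other than `s` and `t`. -/
def IVDFamily {V : Type} (r : V → V → Prop) (s t : V) (P : Finset (List V)) : Prop :=
  (∀ p ∈ P, RWalk r s t p) ∧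
    ∀ p ∈ P, ∀ q ∈ P, p ≠ q → ∀ v : V, v ∈ p → v ∈ q → v = s ∨ v = t

section Digraph

variable {V : Type} {r : V → V → Prop} {s t : V}

/-- The common out-neighbours of `s` and in-neighbours of `t` in the digraph with arc relation
`r`, that is, the middle vertices of the two-arc walks from `s` to `t`. -/
def midpoints (r : V → V → Prop) (s t : V) : Set V :=
  {m | r s m ∧ r m t}

/-- The vertex lists `[s, m, t]` of the two-arc paths from `s` to `t` with middle vertex `m ∈ M`.
The arcs are not part of the definition. -/
def twoArcPaths (s t : V) (M : Finset V) : Finset (List V) :=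
  M.map ⟨fun m ↦ [s, m, t], fun m m' h ↦ by simpa using h⟩

lemma mem_twoArcPaths {M : Finset V} {p : List V} :
    p ∈ twoArcPaths s t M ↔ ∃ m ∈ M, [s, m, t] = p :=
  Finset.mem_map

lemma card_twoArcPaths (s t : V) (M : Finset V) : (twoArcPaths s t M).card = M.card :=
  Finset.card_map _

lemma ivdFamily_twoArcPaths {M : Finset V} (hM : ↑M ⊆ midpoints r s t) :
    IVDFamily r s t (twoArcPaths s t M) := by
  constructor
  · intro p hp
    obtain ⟨m, hm, rfl⟩ := mem_twoArcPaths.1 hp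
    obtain ⟨hsm, hmt⟩ := hM hm
    exact .cons hsm (.cons hmt (.nil t))
  · intro p hp q hq hpq v hvp hvq
    obtain ⟨m, -, rfl⟩ := mem_twoArcPaths.1 hp
    obtain ⟨m', -, rfl⟩ := mem_twoArcPaths.1 hq
    have hmm' : m ≠ m' := fun h ↦ hpq (by rw [h])
    simp only [List.mem_cons, List.not_mem_nil, or_false] at hvp hvq
    grind

lemma IVDFamily.cons {P : Finset (List V)} {p : List V} (hP : IVDFamily r s t P) (hpP : p ∉ P)
    (hp : RWalk r s t p) (hdisj : ∀ q ∈ P, ∀ v ∈ p, v ∈ q → v = s ∨ v = t) :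
    IVDFamily r s t (P.cons p hpP) := by
  constructor
  · exact (Finset.forall_mem_cons hpP _).2 ⟨hp, hP.1⟩
  · intro q hq q' hq' hne v hvq hvq'
    rcases Finset.mem_cons.1 hq with rfl | hqP <;>
      rcases Finset.mem_cons.1 hq' with rfl | hqP'
    · exact absurd rfl hne
    · exact hdisj q' hqP' v hvq hvq'
    · exact hdisj q hqP v hvq' hvq
    · exact hP.2 q hqP q' hqP' hne v hvq hvq'

theorem exists_ivdFamily_card_eq_add_one {M : Finset V} {p : List V}
    (hM : ↑M ⊆ midpoints r s t) (hp : RWalk r s t p) (hpM : ∀ v ∈ p, v ∉ M) :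
    ∃ P : Finset (List V), IVDFamily r s t P ∧ P.card = M.card + 1 := by
  have hp_notMem : p ∉ twoArcPaths s t M := fun h ↦ by
    obtain ⟨m, hm, rfl⟩ := mem_twoArcPaths.1 h
    exact hpM m (by simp) hm
  have hdisj : ∀ q ∈ twoArcPaths s t M, ∀ v ∈ p, v ∈ q → v = s ∨ v = t := by
    intro q hq v hvp hvq
    obtain ⟨m, hm, rfl⟩ := mem_twoArcPaths.1 hq
    have hvm : v ≠ m := fun h ↦ hpM v hvp (h ▸ hm)
    simpa [hvm] using hvq
  exact ⟨_, (ivdFamily_twoArcPaths hM).cons hp_notMem hp hdisj,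
    by rw [Finset.card_cons, card_twoArcPaths]⟩

end Digraph

section FourPartite

variable {A B C D : Type} (eAB : A → B → Prop) (eAC : A → C → Prop) (eBC : B → C → Prop)
  (eBD : B → D → Prop) (eCD : C → D → Prop) (a : A) (d : D)

lemma midpoints_hadj :
    midpoints (Hadj eAB eBC eCD eAC eBD) (.va a) (.vd d) =
      V4.vb '' {b | eAB a b ∧ ¬ eBD b d} ∪ V4.vc '' {c | ¬ eAC a c ∧ eCD c d} := by
  ext (x | x | x | x) <;> simp [midpoints, Hadj]

lemma ncard_image_vb_union_image_vc {S : Set B} {T : Set C} (hS : S.Finite) (hT : T.Finite) :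
    (V4.vb '' S ∪ V4.vc '' T : Set (V4 A B C D)).ncard = S.ncard + T.ncard := by
  have hdisj : Disjoint (V4.vb '' S : Set (V4 A B C D)) (V4.vc '' T) := by
    simp [Set.disjoint_left]
  rw [Set.ncard_union_eq hdisj (hS.image _) (hT.image _),
    Set.ncard_image_of_injective _ fun _ _ ↦ V4.vb.inj,
    Set.ncard_image_of_injective _ fun _ _ ↦ V4.vc.inj]

theorem clique_implies_many_disjoint_paths_general
    (hB : {b | eAB a b ∧ ¬ eBD b d}.Finite) (hC : {c | ¬ eAC a c ∧ eCD c d}.Finite)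
    (bs : B) (cs : C)
    (hclique : eAB a bs ∧ eAC a cs ∧ eBC bs cs ∧ eBD bs d ∧ eCD cs d) :
    ∃ P : Finset (List (V4 A B C D)),
      IVDFamily (Hadj eAB eBC eCD eAC eBD) (V4.va a) (V4.vd d) P ∧
      P.card = {b : B | eAB a b ∧ ¬ eBD b d}.ncard
        + {c : C | ¬ eAC a c ∧ eCD c d}.ncard + 1 := by
  obtain ⟨hab, hac, hbc, hbd, hcd⟩ := hclique
  have hfin : (midpoints (Hadj eAB eBC eCD eAC eBD) (.va a) (.vd d)).Finite := by
    rw [midpoints_hadj]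
    exact (hB.image _).union (hC.image _)
  have hwalk : RWalk (Hadj eAB eBC eCD eAC eBD) (.va a) (.vd d)
      [.va a, .vb bs, .vc cs, .vd d] :=
    .cons (v := V4.vb bs) hab (.cons (v := V4.vc cs) hbc (.cons (v := V4.vd d) hcd (.nil _)))
  have havoid : ∀ v ∈ [V4.va a, .vb bs, .vc cs, .vd d], v ∉ hfin.toFinset := by
    simp [midpoints, Hadj, hbd, hac]
  rw [← ncard_image_vb_union_image_vc hB hC, ← midpoints_hadj eAB eAC eBC eBD eCD,
    Set.ncard_eq_toFinset_card _ hfin]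
  exact exists_ivdFamily_card_eq_add_one hfin.coe_toFinset.subset hwalk havoid

end FourPartite

/-- If `{a,d} ∈ E(G)` and `a, b*, c*, d` form a `4`-clique in `G`, then there are
`|B'_{a,d}| + |C'_{a,d}| + 1` pairwise internally vertex-disjoint directed paths from
`a` to `d` in `H`; in particular `NC(a,d) ≥ |B'_{a,d}| + |C'_{a,d}| + 1`. -/
theorem clique_implies_many_disjoint_paths
    {A B C D : Type} [Fintype A] [Fintype B] [Fintype C] [Fintype D]
    (eAB : A → B → Prop) (eAC : A → C → Prop) (eAD : A → D → Prop)
    (eBC : B → C → Prop) (eBD : B → D → Prop) (eCD : C → D → Prop)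
    (a : A) (d : D) (had : eAD a d)
    (bs : B) (cs : C)
    (hclique : eAB a bs ∧ eAC a cs ∧ eBC bs cs ∧ eBD bs d ∧ eCD cs d) :
    ∃ P : Finset (List (V4 A B C D)),
      IVDFamily (Hadj eAB eBC eCD eAC eBD) (V4.va a) (V4.vd d) P ∧
      P.card = {b : B | eAB a b ∧ ¬ eBD b d}.ncard
        + {c : C | ¬ eAC a c ∧ eCD c d}.ncard + 1 :=
  clique_implies_many_disjoint_paths_general eAB eAC eBC eBD eCD a d
    (Set.toFinite _) (Set.toFinite _) bs cs hclique
end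

section
/- Let G be a 4-partite graph with parts A, B, C, D and let H be the associated digraph. Let a ∈ A, d ∈ D with {a,d} ∈ E(G), and suppose there are no b ∈ B, c ∈ C such that a, b, c, d form a 4-clique in G. Then every directed path from a to d in H contains a vertex of B'_{a,d} ∪ C'_{a,d}; that is, B'_{a,d} ∪ C'_{a,d} is an a-d vertex cut in H. -/
/-!
Arcs of `H` only go forward through `A, B, C, D`, so a directed path from `a` to `d` has the form
`a, b, d` or `a, c, d` or `a, b, c, d`. In the first case `b ∈ B'`, in the second `c ∈ C'`. In the
third case `{a,b}`, `{b,c}`, `{c,d}` are edges of `G`, so, as there is no `4`-clique, `{a,c}` or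
`{b,d}` is a non-edge, which puts `c` in `C'` or `b` in `B'`.
-/

/-- An `s`-`t` vertex cut of a digraph, in the sense of Menger's theorem: the endpoints `s` and `t`
may belong to `S`, but do not help to separate. -/
def IsVertexCut {V : Type} (r : V → V → Prop) (s t : V) (S : Set V) : Prop :=
  ∀ p, RWalk r s t p → ∃ v ∈ p, v ≠ s ∧ v ≠ t ∧ v ∈ S

/-- The set `B'_{a,d}`: the part in `B` of the `a`-`d` vertex cut. -/
def cutPartB {A B D : Type*} (eAB : A → B → Prop) (eBD : B → D → Prop) (a : A) (d : D) : Set B :=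
  {b | eAB a b ∧ ¬ eBD b d}

/-- The set `C'_{a,d}`: the part in `C` of the `a`-`d` vertex cut. -/
def cutPartC {A C D : Type*} (eAC : A → C → Prop) (eCD : C → D → Prop) (a : A) (d : D) : Set C :=
  {c | ¬ eAC a c ∧ eCD c d}

namespace RWalk

variable {V : Type} {r : V → V → Prop} {s t : V} {p : List V}

theorem exists_eq_cons_of_ne (h : RWalk r s t p) (hst : s ≠ t) :
    ∃ v q, r s v ∧ RWalk r v t q ∧ p = s :: q := by
  cases h with
  | nil => exact absurd rfl hst
  | cons hsv hq => exact ⟨_, _, hsv, hq, rfl⟩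

theorem eq_and_eq_singleton_of_sink (h : RWalk r s t p) (hs : ∀ v, ¬ r s v) :
    s = t ∧ p = [s] := by
  cases h with
  | nil => exact ⟨rfl, rfl⟩
  | cons hsv _ => exact absurd hsv (hs _)

end RWalk

section FourPartite

variable {A B C D : Type} {eAB : A → B → Prop} {eBC : B → C → Prop} {eCD : C → D → Prop}
  {eAC : A → C → Prop} {eBD : B → D → Prop} {a : A} {b : B} {c : C} {d x : D}

namespace Hadj

variable {v : V4 A B C D}

theorem exists_of_va (h : Hadj eAB eBC eCD eAC eBD (.va a) v) :
    (∃ b, v = .vb b ∧ eAB a b) ∨ ∃ c, v = .vc c ∧ ¬ eAC a c := by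
  cases v with
  | vb b => exact .inl ⟨b, rfl, h⟩
  | vc c => exact .inr ⟨c, rfl, h⟩
  | va _ | vd _ => exact h.elim

theorem exists_of_vb (h : Hadj eAB eBC eCD eAC eBD (.vb b) v) :
    (∃ c, v = .vc c ∧ eBC b c) ∨ ∃ d, v = .vd d ∧ ¬ eBD b d := by
  cases v with
  | vc c => exact .inl ⟨c, rfl, h⟩
  | vd d => exact .inr ⟨d, rfl, h⟩
  | va _ | vb _ => exact h.elim

theorem exists_of_vc (h : Hadj eAB eBC eCD eAC eBD (.vc c) v) : ∃ d, v = .vd d ∧ eCD c d := by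
  cases v with
  | vd d => exact ⟨d, rfl, h⟩
  | va _ | vb _ | vc _ => exact h.elim

theorem not_of_vd : ¬ Hadj eAB eBC eCD eAC eBD (.vd d) v := id

end Hadj

namespace RWalk

variable {p : List (V4 A B C D)}

theorem eq_and_eq_singleton_of_vd (h : RWalk (Hadj eAB eBC eCD eAC eBD) (.vd x) (.vd d) p) :
    x = d ∧ p = [.vd d] := by
  obtain ⟨hxd, rfl⟩ := h.eq_and_eq_singleton_of_sink fun _ => Hadj.not_of_vd
  obtain rfl := V4.vd.inj hxd
  exact ⟨rfl, rfl⟩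

theorem eq_pair_of_vc (h : RWalk (Hadj eAB eBC eCD eAC eBD) (.vc c) (.vd d) p) :
    eCD c d ∧ p = [.vc c, .vd d] := by
  obtain ⟨v, q, hcv, hq, rfl⟩ := h.exists_eq_cons_of_ne nofun
  obtain ⟨x, rfl, hcx⟩ := hcv.exists_of_vc
  obtain ⟨rfl, rfl⟩ := hq.eq_and_eq_singleton_of_vd
  exact ⟨hcx, rfl⟩

theorem eq_pair_or_triple_of_vb (h : RWalk (Hadj eAB eBC eCD eAC eBD) (.vb b) (.vd d) p) :
    (¬ eBD b d ∧ p = [.vb b, .vd d]) ∨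
      ∃ c, eBC b c ∧ eCD c d ∧ p = [.vb b, .vc c, .vd d] := by
  obtain ⟨v, q, hbv, hq, rfl⟩ := h.exists_eq_cons_of_ne nofun
  obtain ⟨c, rfl, hbc⟩ | ⟨x, rfl, hbx⟩ := hbv.exists_of_vb
  · obtain ⟨hcd, rfl⟩ := hq.eq_pair_of_vc
    exact .inr ⟨c, hbc, hcd, rfl⟩
  · obtain ⟨rfl, rfl⟩ := hq.eq_and_eq_singleton_of_vd
    exact .inl ⟨hbx, rfl⟩

theorem eq_triple_or_quadruple_of_va (h : RWalk (Hadj eAB eBC eCD eAC eBD) (.va a) (.vd d) p) :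
    (∃ b, eAB a b ∧ ¬ eBD b d ∧ p = [.va a, .vb b, .vd d]) ∨
      (∃ c, ¬ eAC a c ∧ eCD c d ∧ p = [.va a, .vc c, .vd d]) ∨
      ∃ b c, eAB a b ∧ eBC b c ∧ eCD c d ∧ p = [.va a, .vb b, .vc c, .vd d] := by
  obtain ⟨v, q, hav, hq, rfl⟩ := h.exists_eq_cons_of_ne nofun
  obtain ⟨b, rfl, hab⟩ | ⟨c, rfl, hac⟩ := hav.exists_of_va
  · obtain ⟨hbd, rfl⟩ | ⟨c, hbc, hcd, rfl⟩ := hq.eq_pair_or_triple_of_vb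
    · exact .inl ⟨b, hab, hbd, rfl⟩
    · exact .inr (.inr ⟨b, c, hab, hbc, hcd, rfl⟩)
  · obtain ⟨hcd, rfl⟩ := hq.eq_pair_of_vc
    exact .inr (.inl ⟨c, hac, hcd, rfl⟩)

end RWalk

end FourPartite

theorem no_clique_vertex_cut_general {A B C D : Type}
    (eAB : A → B → Prop) (eAC : A → C → Prop) (eAD : A → D → Prop)
    (eBC : B → C → Prop) (eBD : B → D → Prop) (eCD : C → D → Prop)
    (a : A) (d : D) (had : eAD a d)
    (hno : ¬ ∃ (b : B) (c : C),
      eAB a b ∧ eAC a c ∧ eAD a d ∧ eBC b c ∧ eBD b d ∧ eCD c d) :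
    IsVertexCut (Hadj eAB eBC eCD eAC eBD) (.va a) (.vd d)
      (V4.vb '' cutPartB eAB eBD a d ∪ V4.vc '' cutPartC eAC eCD a d) := by
  intro p hp
  suffices (∃ b ∈ cutPartB eAB eBD a d, V4.vb b ∈ p) ∨
      ∃ c ∈ cutPartC eAC eCD a d, V4.vc c ∈ p by
    obtain ⟨b, hb, hbp⟩ | ⟨c, hc, hcp⟩ := this
    · exact ⟨.vb b, hbp, nofun, nofun, .inl ⟨b, hb, rfl⟩⟩
    · exact ⟨.vc c, hcp, nofun, nofun, .inr ⟨c, hc, rfl⟩⟩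
  obtain ⟨b, hab, hbd, rfl⟩ | ⟨c, hac, hcd, rfl⟩ | ⟨b, c, hab, hbc, hcd, rfl⟩ :=
    hp.eq_triple_or_quadruple_of_va
  · exact .inl ⟨b, ⟨hab, hbd⟩, by simp⟩
  · exact .inr ⟨c, ⟨hac, hcd⟩, by simp⟩
  · by_cases hac : eAC a c
    · have hbd : ¬ eBD b d := fun hbd => hno ⟨b, c, hab, hac, had, hbc, hbd, hcd⟩
      exact .inl ⟨b, ⟨hab, hbd⟩, by simp⟩
    · exact .inr ⟨c, ⟨hac, hcd⟩, by simp⟩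

/-- If `{a,d} ∈ E(G)` and no `b ∈ B`, `c ∈ C` complete a `4`-clique with `a` and `d`,
then every directed path from `a` to `d` in `H` contains a vertex of
`B'_{a,d} ∪ C'_{a,d}`; i.e. `B'_{a,d} ∪ C'_{a,d}` is an `a`-`d` vertex cut in `H`. -/
theorem no_clique_vertex_cut
    {A B C D : Type} [Fintype A] [Fintype B] [Fintype C] [Fintype D]
    (eAB : A → B → Prop) (eAC : A → C → Prop) (eAD : A → D → Prop)
    (eBC : B → C → Prop) (eBD : B → D → Prop) (eCD : C → D → Prop)
    (a : A) (d : D) (had : eAD a d)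
    (hno : ¬ ∃ (b : B) (c : C),
      eAB a b ∧ eAC a c ∧ eAD a d ∧ eBC b c ∧ eBD b d ∧ eCD c d) :
    ∀ p : List (V4 A B C D),
      RWalk (Hadj eAB eBC eCD eAC eBD) (V4.va a) (V4.vd d) p →
      ∃ v ∈ p,
        (∃ b : B, v = V4.vb b ∧ eAB a b ∧ ¬ eBD b d) ∨
        (∃ cc : C, v = V4.vc cc ∧ ¬ eAC a cc ∧ eCD cc d) := by
  intro p hp
  obtain ⟨v, hv, -, -, ⟨b, hb, rfl⟩ | ⟨c, hc, rfl⟩⟩ :=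
    no_clique_vertex_cut_general eAB eAC eAD eBC eBD eCD a d had hno p hp
  · exact ⟨_, hv, .inl ⟨b, rfl, hb⟩⟩
  · exact ⟨_, hv, .inr ⟨c, rfl, hc⟩⟩
end
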